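/- If A ⊆ ω^ω satisfies: for every slalom φ there is x ∈ A with x(n) ∉ φ(n) for every n, then Player II has a winning strategy in the anti-localizing game with respect to A (always play 1). Consequently the minimal cardinality of a family for which Player II has a winning strategy in the anti-localizing game is at most cov(M). -/

import Mathlib

open Cardinal

/-- `φ` is a slalom: `φ(n)` is a set of `n+1` naturals. -/
def IsSlalom (φ : ℕ → Finset ℕ) : Prop := ∀ n, (φ n).card = n + 1

/-- Player II wins a play of the anti-localizing game with respect to `A`:
`a` is Player I's sequence of moves, `i` is Player II's sequence of moves. -/
def IIWinsAntiLoc (A : Set (ℕ → ℕ)) (a : ℕ → Finset ℕ) (i : ℕ → Bool) : Prop :=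
  {k | i k = true}.Infinite ∧ ∃ x ∈ A, ∀ k, (i k = true ↔ x k ∉ a k)

/-- Player II has a winning strategy in the anti-localizing game with respect to `A`. -/
def IIWinStratAntiLoc (A : Set (ℕ → ℕ)) : Prop :=
  ∃ τ : List (Finset ℕ) → Bool, ∀ a : ℕ → Finset ℕ, IsSlalom a →
    IIWinsAntiLoc A a (fun k => τ ((List.range (k + 1)).map a))

/-- `cov(M)`: the least number of meager sets covering the Cantor space. -/
noncomputable def covMeager : Cardinal :=
  sInf { c | ∃ S : Set (Set (ℕ → Bool)),
    (∀ s ∈ S, IsMeagre s) ∧ ⋃₀ S = Set.univ ∧ #S = c }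


namespace AntiLoc

/-- Every family of functions indexed by `ι` is captured at least once by one slalom. -/
def CapOnce (ι : Type) : Prop :=
  ∀ x : ι → ℕ → ℕ, ∃ φ : ℕ → Finset ℕ, IsSlalom φ ∧ ∀ i, ∃ n, x i n ∈ φ n

theorem capInf {ι : Type} (e : ι × List ℕ ≃ ι) (h : CapOnce ι) (x : ι → ℕ → ℕ) :
    ∃ φ : ℕ → Finset ℕ, IsSlalom φ ∧ ∀ i m, ∃ n, m ≤ n ∧ x i n ∈ φ n := by
  obtain ⟨φ, hφ, hc⟩ := h (fun i n => (e.symm i).2.getD n (x (e.symm i).1 n))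
  refine ⟨φ, hφ, fun i m => ?_⟩
  have hp : ∀ n, ∃ a, a ∉ φ n := fun n => Infinite.exists_notMem_finset (φ n)
  choose pick hpick using hp
  obtain ⟨n, hn⟩ := hc (e (i, (List.range m).map pick))
  simp only [Equiv.symm_apply_apply] at hn
  by_cases hm : n < m
  · exfalso
    rw [List.getD_eq_getElem _ _ (by simpa using hm)] at hn
    simp at hn
    exact hpick n hn
  · rw [List.getD_eq_default _ _ (by simpa using hm)] at hn
    exact ⟨n, by omega, hn⟩

theorem infEq {ι : Type} (e : ι × List ℕ ≃ ι) (h : CapOnce ι) {β : Type} [Encodable β]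
    [Inhabited β] (x : ι → ℕ → β) :
    ∃ g : ℕ → β, ∀ i m, ∃ k, m ≤ k ∧ g k = x i k := by
  obtain ⟨φ, hφ, hc⟩ := capInf e h
    (fun i n => Encodable.encode ((List.range (n+1)).map (fun j => x i (Nat.pair n j))))
  refine ⟨fun k => (((Encodable.decode (α := List β)
    ((φ k.unpair.1).toList.getD k.unpair.2 0)).getD []).getD k.unpair.2 default), fun i m => ?_⟩
  obtain ⟨n, hn, hx⟩ := hc i m
  rw [← Finset.mem_toList] at hx
  obtain ⟨j, hj, hjx⟩ := List.mem_iff_getElem.1 hx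
  refine ⟨Nat.pair n j, hn.trans (Nat.left_le_pair n j), ?_⟩
  have hj' : j < n + 1 := by
    have := hφ n
    rw [Finset.length_toList] at hj
    omega
  simp only [Nat.unpair_pair]
  rw [List.getD_eq_getElem _ _ hj, hjx, Encodable.encodek]
  simp only [Option.getD_some]
  rw [List.getD_eq_getElem _ _ (by simpa using hj')]
  simp

/-- the list of points picked so far -/
noncomputable def picks {β : Type} [Inhabited β] (c : ℕ → List (ℕ × β) → ℕ × β) :
    ℕ → List (ℕ × β)
  | 0 => []
  | n + 1 => c n (picks c n) :: picks c n

theorem picks_length {β : Type} [Inhabited β] (c : ℕ → List (ℕ × β) → ℕ × β) (n : ℕ) :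
    (picks c n).length = n := by
  induction n with
  | zero => rfl
  | succ n ih => simp [picks, ih]

theorem picks_mem {β : Type} [Inhabited β] (c : ℕ → List (ℕ × β) → ℕ × β) (m n : ℕ)
    (h : m < n) : c m (picks c m) ∈ picks c n := by
  induction n with
  | zero => omega
  | succ n ih =>
    rcases Nat.lt_succ_iff_lt_or_eq.1 h with h | rfl
    · exact List.mem_cons_of_mem _ (ih h)
    · exact List.mem_cons_self

theorem infEqPartial {ι : Type} (e : ι × List ℕ ≃ ι) (h : CapOnce ι) {β : Type} [Encodable β]
    [Inhabited β] (X : ι → Set ℕ) (hX : ∀ i, (X i).Infinite) (f : ι → ℕ → β) :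
    ∃ g : ℕ → β, ∀ i, {k | k ∈ X i ∧ g k = f i k}.Infinite := by
  classical
  have hT : ∀ i n, ∃ t : Finset ℕ, (↑t ⊆ X i) ∧ t.card = n + 1 :=
    fun i n => (hX i).exists_subset_card_eq (n+1)
  choose T hTX hTc using hT
  obtain ⟨G, hG⟩ := infEq e h (β := List (ℕ × β))
    (fun i n => (T i n).toList.map (fun k => (k, f i k)))
  have hcc : ∀ (n : ℕ) (L : List (ℕ × β)), ∃ p : ℕ × β,
      (∃ q ∈ G n, q.1 ∉ L.map Prod.fst) → (p ∈ G n ∧ p.1 ∉ L.map Prod.fst) := by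
    intro n L
    by_cases hh : ∃ q ∈ G n, q.1 ∉ L.map Prod.fst
    · obtain ⟨q, hq⟩ := hh
      exact ⟨q, fun _ => hq⟩
    · exact ⟨default, fun h' => absurd h' hh⟩
  choose c hc using hcc
  let p : ℕ → ℕ × β := fun n => c n (picks c n)
  let g : ℕ → β := fun k => if hk : ∃ n, (p n).1 = k then (p (Nat.find hk)).2 else default
  refine ⟨g, fun i => ?_⟩
  let N : Set ℕ := {n | G n = (T i n).toList.map (fun k => (k, f i k))}
  have hN : N.Infinite := by
    apply Set.infinite_of_forall_exists_gt
    intro a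
    obtain ⟨k, hk, hk'⟩ := hG i (a+1)
    exact ⟨k, hk', by omega⟩
  have key : ∀ n ∈ N, p n ∈ G n ∧ ∀ m < n, (p m).1 ≠ (p n).1 := by
    intro n hn
    have hex : ∃ q ∈ G n, q.1 ∉ (picks c n).map Prod.fst := by
      have hcard : ((picks c n).map Prod.fst).toFinset.card < (T i n).card := by
        have := List.toFinset_card_le ((picks c n).map Prod.fst)
        rw [List.length_map, picks_length] at this
        rw [hTc]; omega
      obtain ⟨k, hk, hk'⟩ := Finset.exists_mem_notMem_of_card_lt_card hcard
      refine ⟨(k, f i k), ?_, ?_⟩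
      · rw [show G n = _ from hn]
        exact List.mem_map.2 ⟨k, Finset.mem_toList.2 hk, rfl⟩
      · rwa [List.mem_toFinset] at hk'
    obtain ⟨h1, h2⟩ := hc n _ hex
    refine ⟨h1, fun m hm heq => h2 ?_⟩
    exact List.mem_map.2 ⟨_, picks_mem c m n hm, heq⟩
  have hinj : Set.InjOn (fun n => (p n).1) N := by
    intro a ha b hb hab
    rcases lt_trichotomy a b with hlt | heq | hlt
    · exact absurd hab ((key b hb).2 a hlt)
    · exact heq
    · exact absurd hab.symm ((key a ha).2 b hlt)
  refine (hN.image hinj).mono ?_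
  rintro _ ⟨n, hn, rfl⟩
  obtain ⟨h1, h2⟩ := key n hn
  rw [show G n = _ from hn] at h1
  obtain ⟨k, hk, hkp⟩ := List.mem_map.1 h1
  have hk1 : (p n).1 = k := by rw [← hkp]
  have hk2 : (p n).2 = f i k := by rw [← hkp]
  have hex : ∃ m, (p m).1 = (p n).1 := ⟨n, rfl⟩
  have hfind : Nat.find hex = n := by
    rw [Nat.find_eq_iff]
    exact ⟨rfl, fun m hm => h2 m hm⟩
  refine ⟨?_, ?_⟩
  · show (p n).1 ∈ X i
    rw [hk1]; exact hTX i n (Finset.mem_toList.1 hk)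
  · show g (p n).1 = f i (p n).1
    simp only [g]
    rw [dif_pos hex, hfind, hk2, hk1]

theorem goodFinset (W : Set (ℕ → Bool)) (hW : IsOpen W) (hd : Dense W) (n : ℕ)
    (T : Finset (ℕ → Bool)) :
    ∃ N, n ≤ N ∧ ∃ t : ℕ → Bool, ∀ z : ℕ → Bool, (∃ s ∈ T, ∀ j < n, z j = s j) →
      (∀ j, n ≤ j → j < N → z j = t j) → z ∈ W := by
  classical
  induction T using Finset.induction_on with
  | empty => exact ⟨n, le_rfl, fun _ => false, by simp⟩
  | insert s T _ ih =>
    obtain ⟨N, hN, t, ht⟩ := ih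
    let y : ℕ → Bool := fun j => if j < n then s j else t j
    obtain ⟨y', hy', hyW⟩ := hd.inter_open_nonempty (PiNat.cylinder y N)
      (PiNat.isOpen_cylinder (fun _ => Bool) y N) ⟨y, PiNat.self_mem_cylinder y N⟩
    obtain ⟨_, ⟨u, N', rfl⟩, hmem, hsub⟩ :=
      (PiNat.isTopologicalBasis_cylinders (fun _ : ℕ => Bool)).exists_subset_of_mem_open hyW hW
    rw [PiNat.mem_cylinder_iff_eq] at hmem
    rw [← hmem] at hsub
    rw [PiNat.mem_cylinder_iff] at hy'
    refine ⟨max N N', hN.trans (le_max_left _ _), y', fun z hz hzt => ?_⟩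
    obtain ⟨s', hs', hzs⟩ := hz
    rcases Finset.mem_insert.1 hs' with rfl | hs'
    · apply hsub
      rw [PiNat.mem_cylinder_iff]
      intro j hj
      by_cases hjn : j < n
      · rw [hzs j hjn, hy' j (by omega)]
        simp [y, hjn]
      · exact hzt j (by omega) (lt_of_lt_of_le hj (le_max_right _ _))
    · apply ht z ⟨s', hs', hzs⟩
      intro j hj hjN
      rw [hzt j hj (lt_of_lt_of_le hjN (le_max_left _ _)), hy' j hjN]
      simp [y, not_lt.2 hj]

theorem good (W : Set (ℕ → Bool)) (hW : IsOpen W) (hd : Dense W) (n : ℕ) :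
    ∃ N, ∃ t : ℕ → Bool, ∀ z : ℕ → Bool,
      (∀ j, n ≤ j → j < N → z j = t j) → z ∈ W := by
  classical
  obtain ⟨N, _, t, ht⟩ := goodFinset W hW hd n
    (Finset.univ.image (fun (s : Fin n → Bool) (j : ℕ) => if h : j < n then s ⟨j, h⟩ else false))
  refine ⟨N, t, fun z hz => ht z ⟨_, Finset.mem_image.2 ⟨fun j => z j, Finset.mem_univ _, rfl⟩, ?_⟩ hz⟩
  intro j hj
  simp [hj]

theorem meagreData (M : Set (ℕ → Bool)) (hM : IsMeagre M) :
    ∃ (W : ℕ → Set (ℕ → Bool)) (d : ℕ → ℕ) (t : ℕ → ℕ → Bool),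
      Antitone W ∧ (∀ z, (∀ n, z ∈ W n) → z ∉ M) ∧ Monotone d ∧
      ∀ n (z : ℕ → Bool), (∀ j, n ≤ j → j < d n → z j = t n j) → z ∈ W n := by
  have hM' : Mᶜ ∈ residual (ℕ → Bool) := hM
  rw [mem_residual_iff] at hM'
  obtain ⟨S, hSo, hSd, hSc, hSM⟩ := hM'
  obtain ⟨U, hU⟩ := (hSc.insert Set.univ).exists_eq_range (Set.insert_nonempty _ _)
  have hUm : ∀ n, U n = Set.univ ∨ U n ∈ S := by
    intro n
    have : U n ∈ insert Set.univ S := hU ▸ Set.mem_range_self n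
    exact this
  have hUo : ∀ n, IsOpen (U n) := by
    intro n
    rcases hUm n with h | h
    · rw [h]; exact isOpen_univ
    · exact hSo _ h
  have hUd : ∀ n, Dense (U n) := by
    intro n
    rcases hUm n with h | h
    · rw [h]; exact dense_univ
    · exact hSd _ h
  let W : ℕ → Set (ℕ → Bool) := fun n => ⋂ i ∈ Set.Iic n, U i
  have hWo : ∀ n, IsOpen (W n) := fun n => (Set.finite_Iic n).isOpen_biInter fun i _ => hUo i
  have hWd : ∀ n, Dense (W n) := fun n =>
    dense_biInter_of_isOpen (fun i _ => hUo i) (Set.finite_Iic n).countable (fun i _ => hUd i)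
  choose D t hD using fun n => good (W n) (hWo n) (hWd n) n
  refine ⟨W, fun n => (Finset.range (n+1)).sup D, t, ?_, ?_, ?_, ?_⟩
  · intro a b hab z hz
    simp only [W, Set.mem_iInter, Set.mem_Iic] at hz ⊢
    exact fun i hi => hz i (hi.trans hab)
  · intro z hz hzM
    refine hSM (fun s hs => ?_) hzM
    have : s ∈ Set.range U := hU ▸ Set.mem_insert_of_mem _ hs
    obtain ⟨n, rfl⟩ := this
    have := hz n
    simp only [W, Set.mem_iInter, Set.mem_Iic] at this
    exact this n le_rfl
  · intro a b hab
    exact Finset.sup_mono (Finset.range_mono (by omega))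
  · intro n z hz
    apply hD n z
    intro j hj hjD
    exact hz j hj (lt_of_lt_of_le hjD (Finset.le_sup (f := D) (by simp)))

theorem avoid {ι : Type} (e : ι × List ℕ ≃ ι) (h : CapOnce ι) (M : ι → Set (ℕ → Bool))
    (hM : ∀ i, IsMeagre (M i)) : ∃ z, ∀ i, z ∉ M i := by
  classical
  choose W d t hWa hWM hdm hdt using fun i => meagreData (M i) (hM i)
  obtain ⟨g, hg⟩ := infEq e h (fun i n => d i (d i n))
  let b : ℕ → ℕ := fun n => (Finset.range (n+1)).sup g
  have hb : Monotone b := fun a c hac => Finset.sup_mono (Finset.range_mono (by omega))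
  have hgb : ∀ n, g n ≤ b n := fun n => Finset.le_sup (f := g) (by simp)
  obtain ⟨m, hm0, hms⟩ : ∃ m : ℕ → ℕ, m 0 = 0 ∧ ∀ k, m (k+1) = max (b (m k)) (m k + 1) :=
    ⟨fun k => Nat.rec 0 (fun _ r => max (b r) (r + 1)) k, rfl, fun _ => rfl⟩
  have hmm : StrictMono m := strictMono_nat_of_lt_succ fun k => by
    rw [hms]; exact lt_of_lt_of_le (Nat.lt_succ_self _) (le_max_right _ _)
  have hloc : ∀ n, ∃ k, m k ≤ n ∧ n < m (k+1) := by
    intro n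
    induction n with
    | zero => exact ⟨0, by omega, lt_of_le_of_lt (Nat.zero_le _) (hmm (Nat.lt_succ_self 0))⟩
    | succ n ih =>
      obtain ⟨k, h1, h2⟩ := ih
      by_cases hk : n + 1 < m (k+1)
      · exact ⟨k, by omega, hk⟩
      · refine ⟨k+1, by omega, ?_⟩
        have := hmm (Nat.lt_succ_self (k+1))
        simp only [Nat.succ_eq_add_one] at this
        omega
  have huniq : ∀ n k l, m k ≤ n → n < m (k+1) → m l ≤ n → n < m (l+1) → k = l := by
    intro n k l h1 h2 h3 h4
    have := hmm.lt_iff_lt.1 (show m k < m (l+1) from lt_of_le_of_lt h1 h4)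
    have := hmm.lt_iff_lt.1 (show m l < m (k+1) from lt_of_le_of_lt h3 h2)
    omega
  have hX : ∀ i, {k | d i (m k) ≤ m (k+1)}.Infinite := by
    intro i
    apply Set.infinite_of_forall_exists_gt
    intro a
    obtain ⟨n, hn, hgn⟩ := hg i (m (a+1))
    obtain ⟨k, h1, h2⟩ := hloc n
    have hak : a + 1 < k + 1 := hmm.lt_iff_lt.1 (show m (a+1) < m (k+1) from lt_of_le_of_lt hn h2)
    have hbn : d i (d i n) ≤ m (k+1+1) := by
      rw [← hgn, hms (k+1)]
      exact ((hgb n).trans (hb h2.le)).trans (le_max_left _ _)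
    by_cases hc : d i n ≤ m (k+1)
    · exact ⟨k, (hdm i h1).trans hc, by omega⟩
    · exact ⟨k+1, (hdm i (not_le.1 hc).le).trans hbn, by omega⟩
  obtain ⟨G, hG⟩ := infEqPartial e h (β := List Bool) _ hX
    (fun i k => (List.range (m (k+1))).map (t i (m k)))
  choose K hK1 hK2 using hloc
  refine ⟨fun j => (G (K j)).getD j false, fun i => hWM i _ fun n => ?_⟩
  obtain ⟨k, ⟨hk1, hk2⟩, hkn⟩ := (hG i).exists_gt n
  apply hWa i (show n ≤ m k from hkn.le.trans hmm.le_apply)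
  apply hdt
  intro j hj hjd
  have hj2 : j < m (k+1) := lt_of_lt_of_le hjd hk1
  have hKj : K j = k := huniq j _ _ (hK1 j) (hK2 j) hj hj2
  simp only [hKj, hk2]
  rw [List.getD_eq_getElem _ _ (by simpa using hj2)]
  simp

theorem singleton_meagre (x : ℕ → Bool) : IsMeagre ({x} : Set (ℕ → Bool)) := by
  apply IsNowhereDense.isMeagre
  rw [isClosed_singleton.isNowhereDense_iff]
  rw [Set.eq_empty_iff_forall_notMem]
  intro y hy
  obtain ⟨_, ⟨u, N, rfl⟩, hmem, hsub⟩ :=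
    (PiNat.isTopologicalBasis_cylinders (fun _ : ℕ => Bool)).exists_subset_of_mem_open hy
      isOpen_interior
  have h1 : y = x := Set.mem_singleton_iff.1 (interior_subset hy)
  have h2 : Function.update y N (!(y N)) ∈ PiNat.cylinder u N := by
    rw [PiNat.mem_cylinder_iff] at hmem ⊢
    intro j hj
    rw [Function.update_of_ne hj.ne, hmem j hj]
  have h3 : Function.update y N (!(y N)) = x :=
    Set.mem_singleton_iff.1 (interior_subset (hsub h2))
  have h4 := congrFun h3 N
  rw [Function.update_self, ← h1] at h4
  simp at h4

theorem strat (A : Set (ℕ → ℕ))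
    (hA : ∀ φ : ℕ → Finset ℕ, IsSlalom φ → ∃ x ∈ A, ∀ n, x n ∉ φ n) :
    IIWinStratAntiLoc A := by
  refine ⟨fun _ => true, fun a ha => ⟨?_, ?_⟩⟩
  · simpa using Set.infinite_univ (α := ℕ)
  · obtain ⟨x, hx, hn⟩ := hA a ha
    exact ⟨x, hx, fun k => by simpa using hn k⟩

end AntiLoc

theorem stmt10 :
    (∀ A : Set (ℕ → ℕ),
      (∀ φ : ℕ → Finset ℕ, IsSlalom φ → ∃ x ∈ A, ∀ n, x n ∉ φ n) →
      IIWinStratAntiLoc A) ∧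
    sInf { c | ∃ A : Set (ℕ → ℕ), IIWinStratAntiLoc A ∧ #A = c } ≤ covMeager := by
  refine ⟨AntiLoc.strat, ?_⟩
  have hne : { c | ∃ S : Set (Set (ℕ → Bool)),
    (∀ s ∈ S, IsMeagre s) ∧ ⋃₀ S = Set.univ ∧ #S = c }.Nonempty := by
    refine ⟨_, Set.range (fun x : ℕ → Bool => ({x} : Set (ℕ → Bool))), ?_, ?_, rfl⟩
    · rintro _ ⟨x, rfl⟩
      exact AntiLoc.singleton_meagre x
    · ext x
      simp
  obtain ⟨S, hS, hcov, hcard⟩ := csInf_mem hne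
  change #S = covMeager at hcard
  rw [← hcard]
  have hinf : Infinite S := by
    by_contra hfin
    rw [not_infinite_iff_finite] at hfin
    have hc : S.Countable := (Set.toFinite S).countable
    have hmeag : IsMeagre (⋃₀ S) := by
      rw [Set.sUnion_eq_biUnion]
      exact isMeagre_biUnion hc hS
    rw [hcov] at hmeag
    have : (Set.univᶜ : Set (ℕ → Bool)) ∈ residual _ := hmeag
    have hd := dense_of_mem_residual this
    rw [Set.compl_univ] at hd
    exact Set.not_nonempty_empty hd.nonempty
  have e : S × List ℕ ≃ S := by
    apply Classical.choice
    rw [← Cardinal.eq]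
    rw [Cardinal.mk_prod, Cardinal.lift_id, Cardinal.lift_id]
    exact Cardinal.mul_eq_left (Cardinal.aleph0_le_mk S)
      (Cardinal.mk_le_aleph0.trans (Cardinal.aleph0_le_mk S)) (Cardinal.mk_ne_zero _)
  by_contra hlt
  have hcap : AntiLoc.CapOnce S := by
    intro x
    by_contra hno
    push Not at hno
    apply hlt
    have hmem : IIWinStratAntiLoc (Set.range x) → #(Set.range x) ∈
        { c | ∃ A : Set (ℕ → ℕ), IIWinStratAntiLoc A ∧ #A = c } := fun h => ⟨_, h, rfl⟩
    refine (csInf_le' (hmem (AntiLoc.strat _ ?_))).trans Cardinal.mk_range_le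
    intro φ hφ
    obtain ⟨i, hi⟩ := hno φ hφ
    exact ⟨x i, Set.mem_range_self i, hi⟩
  obtain ⟨z, hz⟩ := AntiLoc.avoid e hcap (fun s => s.1) (fun s => hS s.1 s.2)
  have hzu : z ∈ ⋃₀ S := by rw [hcov]; trivial
  obtain ⟨s, hs, hzs⟩ := hzu
  exact hz ⟨s, hs⟩ hzs
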